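/- For t → ∞, the constant C₂ in the connection formula C₂(t) − Υ₂(k) ≈ −∫_{√t}^{k√t} e^{ts − s³/3}·(Ai(t)·s − Ai'(t)) ds (for fixed k > 1) has the asymptotic expansion C₂(t) − Υ₂(k) = −1/2 − (1/(12√π))·t^{−3/4} + (35/(1728√π))·t^{−9/4} + O(t^{−15/4}), obtained by substituting s = √t(1+r), expanding e^{(2/3)t^{3/2} − t^{3/2}r² − (1/3)t^{3/2}r³} as e^{−t^{3/2}r²}(1 − (1/3)t^{3/2}r³ + …)e^{(2/3)t^{3/2}}, and evaluating the resulting Gaussian integrals over r ∈ (0, ∞), using Ai(t) ~ (2√π)^{-1}t^{-1/4}e^{−(2/3)t^{3/2}} and Ai'(t) ~ −(2√π)^{-1}t^{1/4}e^{−(2/3)t^{3/2}}. -/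

import Mathlib

open Real Filter Asymptotics

lemma aux_mono {f f' : ℝ → ℝ} {T : ℝ} (hd : ∀ t, T ≤ t → HasDerivAt f (f' t) t)
    (hn : ∀ t, T ≤ t → 0 ≤ f' t) (hl : Tendsto f atTop (nhds 0)) : ∀ t, T ≤ t → f t ≤ 0 := by
  have hm : MonotoneOn f (Set.Ici T) := by
    apply monotoneOn_of_deriv_nonneg (convex_Ici T)
    · intro x hx
      exact (hd x hx).continuousAt.continuousWithinAt
    · intro x hx
      rw [interior_Ici] at hx
      exact (hd x (le_of_lt hx)).differentiableAt.differentiableWithinAt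
    · intro x hx
      rw [interior_Ici] at hx
      rw [(hd x (le_of_lt hx)).deriv]
      exact hn x (le_of_lt hx)
  intro t ht
  apply ge_of_tendsto hl
  filter_upwards [eventually_ge_atTop t] with x hx
  exact hm ht (le_trans ht hx) hx

lemma aux_exists {f' : ℝ → ℝ} {q : ℝ} (hO : f' =O[atTop] (fun t : ℝ => t ^ q)) {p : ℝ → Prop}
    (hp : ∀ᶠ t in atTop, p t) :
    ∃ C T : ℝ, 0 < C ∧ 0 < T ∧ ∀ t, T ≤ t → p t ∧ |f' t| ≤ C * t ^ q := by
  obtain ⟨C, hC, h⟩ := hO.exists_pos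
  have h1 := h.bound
  obtain ⟨T, hT⟩ := eventually_atTop.1 (h1.and hp)
  refine ⟨C, max T 1, hC, by positivity, fun t ht => ?_⟩
  have ht1 : 1 ≤ t := le_trans (le_max_right _ _) ht
  obtain ⟨h2, h3⟩ := hT t (le_trans (le_max_left _ _) ht)
  refine ⟨h3, ?_⟩
  rwa [Real.norm_eq_abs, Real.norm_eq_abs, abs_of_nonneg (rpow_nonneg (by linarith) q)] at h2

lemma aux_B_half {f f' : ℝ → ℝ} {C T a : ℝ} (ha : 0 < a) (hT : 0 < T)
    (hd : ∀ t, T ≤ t → HasDerivAt f (f' t) t) (hb : ∀ t, T ≤ t → |f' t| ≤ C * t ^ (-a - 1))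
    (hl : Tendsto f atTop (nhds 0)) : ∀ t, T ≤ t → f t ≤ C / a * t ^ (-a) := by
  have := aux_mono (f := fun t => f t - C / a * t ^ (-a))
    (f' := fun t => f' t - C / a * (-a * t ^ (-a - 1))) (T := T) ?_ ?_ ?_
  · intro t ht
    have := this t ht
    linarith
  · intro t ht
    exact (hd t ht).sub ((Real.hasDerivAt_rpow_const (Or.inl (by linarith))).const_mul _)
  · intro t ht
    have h1 := (abs_le.1 (hb t ht)).1
    have : C / a * (-a * t ^ (-a - 1)) = - (C * t ^ (-a - 1)) := by field_simp
    simp only [this]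
    linarith
  · have h2 := (tendsto_rpow_neg_atTop ha).const_mul (C / a)
    simpa using hl.sub h2

lemma aux_B {f f' : ℝ → ℝ} {a : ℝ} (ha : 0 < a)
    (hd : ∀ᶠ t in atTop, HasDerivAt f (f' t) t) (hO : f' =O[atTop] (fun t : ℝ => t ^ (-a - 1)))
    (hl : Tendsto f atTop (nhds 0)) : f =O[atTop] (fun t : ℝ => t ^ (-a)) := by
  obtain ⟨C, T, hC, hT, h⟩ := aux_exists hO hd
  have h1 := aux_B_half ha hT (fun t ht => (h t ht).1) (fun t ht => (h t ht).2) hl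
  have h2 := aux_B_half (f := fun t => - f t) (f' := fun t => - f' t) ha hT
    (fun t ht => (h t ht).1.neg) (fun t ht => by rw [abs_neg]; exact (h t ht).2)
    (by simpa using hl.neg)
  apply IsBigO.of_bound (C / a)
  filter_upwards [eventually_ge_atTop T] with t ht
  rw [Real.norm_eq_abs, Real.norm_eq_abs, abs_of_nonneg (rpow_nonneg (by linarith) _), abs_le]
  exact ⟨by linarith [h2 t ht], h1 t ht⟩

lemma aux_A_half {f g : ℝ → ℝ} {C T a : ℝ} (ha : 0 < a) (hT : 0 < T) (hC : 0 < C)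
    (hd : ∀ t, T ≤ t → HasDerivAt f (2 * t ^ (1 / 2 : ℝ) * f t + g t) t)
    (hb : ∀ t, T ≤ t → |g t| ≤ C * t ^ (-a))
    (hl : Tendsto f atTop (nhds 0)) : ∀ t, T ≤ t → f t ≤ C / 2 * t ^ (-a - 1 / 2) := by
  have key := aux_mono
    (f := fun t => (f t - C / 2 * t ^ (-a - 1 / 2)) * Real.exp (-(4 / 3) * t ^ (3 / 2 : ℝ)))
    (f' := fun t => (2 * t ^ (1 / 2 : ℝ) * f t + g t - C / 2 * ((-a - 1 / 2) *
        t ^ (-a - 1 / 2 - 1))) * Real.exp (-(4 / 3) * t ^ (3 / 2 : ℝ))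
        + (f t - C / 2 * t ^ (-a - 1 / 2)) * (Real.exp (-(4 / 3) * t ^ (3 / 2 : ℝ)) *
          (-(4 / 3) * (3 / 2 * t ^ (3 / 2 - 1 : ℝ))))) (T := T) ?_ ?_ ?_
  · intro t ht
    have := key t ht
    have := nonpos_of_mul_nonpos_left this (Real.exp_pos _)
    linarith
  · intro t ht
    have h0 : t ≠ 0 := by linarith
    exact ((hd t ht).sub ((Real.hasDerivAt_rpow_const (Or.inl h0)).const_mul _)).mul
      ((Real.hasDerivAt_rpow_const (Or.inl h0)).const_mul _).exp
  · intro t ht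
    have h0 : 0 < t := by linarith
    have h1 := (abs_le.1 (hb t ht)).1
    have e1 : (3 / 2 - 1 : ℝ) = 1 / 2 := by norm_num
    have e2 : t ^ (1 / 2 : ℝ) * t ^ (-a - 1 / 2) = t ^ (-a) := by
      rw [← rpow_add h0]; ring_nf
    have e3 : 0 ≤ C / 2 * ((a + 1 / 2) * t ^ (-a - 1 / 2 - 1)) := by positivity
    simp only [e1]
    have : (2 * t ^ (1 / 2 : ℝ) * f t + g t - C / 2 * ((-a - 1 / 2) *
        t ^ (-a - 1 / 2 - 1))) * Real.exp (-(4 / 3) * t ^ (3 / 2 : ℝ))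
        + (f t - C / 2 * t ^ (-a - 1 / 2)) * (Real.exp (-(4 / 3) * t ^ (3 / 2 : ℝ)) *
          (-(4 / 3) * (3 / 2 * t ^ (1 / 2 : ℝ)))) =
        Real.exp (-(4 / 3) * t ^ (3 / 2 : ℝ)) * (g t + C * (t ^ (1 / 2 : ℝ) * t ^ (-a - 1 / 2))
          + C / 2 * ((a + 1 / 2) * t ^ (-a - 1 / 2 - 1))) := by ring
    rw [this, e2]
    apply mul_nonneg (Real.exp_pos _).le
    linarith
  · have h2 := (tendsto_rpow_neg_atTop (show 0 < a + 1 / 2 by linarith)).const_mul (C / 2)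
    have h3 : Tendsto (fun t : ℝ => Real.exp (-(4 / 3) * t ^ (3 / 2 : ℝ))) atTop (nhds 0) := by
      apply Real.tendsto_exp_atBot.comp
      exact (tendsto_rpow_atTop (by norm_num)).const_mul_atTop_of_neg (by norm_num)
    have e : -(a + 1 / 2) = -a - 1 / 2 := by ring
    rw [e] at h2
    simpa using (hl.sub h2).mul h3

lemma aux_A {f g : ℝ → ℝ} {a : ℝ} (ha : 0 < a)
    (hd : ∀ᶠ t in atTop, HasDerivAt f (2 * t ^ (1 / 2 : ℝ) * f t + g t) t)
    (hO : g =O[atTop] (fun t : ℝ => t ^ (-a)))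
    (hl : Tendsto f atTop (nhds 0)) : f =O[atTop] (fun t : ℝ => t ^ (-a - 1 / 2)) := by
  obtain ⟨C, T, hC, hT, h⟩ := aux_exists hO hd
  have h1 := aux_A_half ha hT hC (fun t ht => (h t ht).1) (fun t ht => (h t ht).2) hl
  have h2 := aux_A_half (f := fun t => - f t) (g := fun t => - g t) ha hT hC
    (fun t ht => (h t ht).1.neg.congr_deriv (by ring))
    (fun t ht => by rw [abs_neg]; exact (h t ht).2)
    (by simpa using hl.neg)
  apply IsBigO.of_bound (C / 2)
  filter_upwards [eventually_ge_atTop T] with t ht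
  rw [Real.norm_eq_abs, Real.norm_eq_abs, abs_of_nonneg (rpow_nonneg (by linarith) _), abs_le]
  exact ⟨by linarith [h2 t ht], h1 t ht⟩

lemma aux_pw {t : ℝ} (ht : 0 < t) (p : ℝ) (n : ℤ) (h : p = n / 4) :
    t ^ p = (t ^ (1 / 4 : ℝ)) ^ n := by
  rw [h, ← rpow_intCast (t ^ (1 / 4 : ℝ)) n, ← rpow_mul ht.le]; congr 1; ring

/-- expansion of the difference mode -/
lemma aux_D {S D : ℝ → ℝ}
    (hS : ∀ᶠ t in atTop, HasDerivAt S (D t / (4 * t)) t)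
    (hD : ∀ᶠ t in atTop, HasDerivAt D (2 * t ^ (1 / 2 : ℝ) * D t + S t / (4 * t)) t)
    (hSO : (fun t => S t - 2) =O[atTop] (fun t : ℝ => t ^ (-3 / 2 : ℝ)))
    (hDO : D =O[atTop] (fun t : ℝ => t ^ (-3 / 2 : ℝ))) :
    (fun t => D t + 1 / 4 * t ^ (-3 / 2 : ℝ) - 35 / 192 * t ^ (-3 : ℝ)) =O[atTop]
      (fun t : ℝ => t ^ (-9 / 2 : ℝ)) := by
  have t32 : Tendsto (fun t : ℝ => t ^ (-3 / 2 : ℝ)) atTop (nhds 0) := by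
    have := tendsto_rpow_neg_atTop (show (0:ℝ) < 3 / 2 by norm_num)
    convert this using 3; norm_num
  have t3 : Tendsto (fun t : ℝ => t ^ (-3 : ℝ)) atTop (nhds 0) := by
    exact tendsto_rpow_neg_atTop (show (0:ℝ) < 3 by norm_num)
  have dl := hDO.trans_tendsto t32
  have sl := hSO.trans_tendsto t32
  have divO : ∀ (f : ℝ → ℝ) (p q : ℝ), p - 1 = q → f =O[atTop] (fun t : ℝ => t ^ p) →
      (fun t => f t / (4 * t)) =O[atTop] (fun t : ℝ => t ^ q) := by
    intro f p q hpq hf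
    have h1 : (fun t : ℝ => 1 / (4 * t)) =O[atTop] (fun t : ℝ => t ^ (-1 : ℝ)) := by
      apply IsBigO.of_bound (1 / 4)
      filter_upwards [eventually_gt_atTop 0] with t ht
      rw [rpow_neg_one, Real.norm_eq_abs, Real.norm_eq_abs, abs_of_pos (by positivity),
        abs_of_pos (by positivity)]
      apply le_of_eq; field_simp
    refine (hf.mul h1).congr' ?_ ?_
    · filter_upwards with t
      ring
    · filter_upwards [eventually_gt_atTop 0] with t ht
      rw [← rpow_add ht, ← hpq]; rfl
  have s1 : (fun t => D t + 1 / 4 * t ^ (-3 / 2 : ℝ)) =O[atTop] (fun t : ℝ => t ^ (-3 : ℝ)) := by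
    have := aux_A (f := fun t => D t + 1 / 4 * t ^ (-3 / 2 : ℝ))
      (g := fun t => (S t - 2) / (4 * t) - 3 / 8 * t ^ (-5 / 2 : ℝ)) (a := 5 / 2) (by norm_num)
      ?_ ?_ ?_
    · convert this using 3; norm_num
    · filter_upwards [hD, eventually_gt_atTop 0] with t h ht
      refine (h.add ((Real.hasDerivAt_rpow_const (Or.inl ht.ne')).const_mul _)).congr_deriv ?_
      have hy : 0 < t ^ (1 / 4 : ℝ) := by positivity
      have e0 := aux_pw ht 1 4 (by norm_num)
      rw [rpow_one] at e0
      rw [aux_pw ht (-3 / 2 - 1) (-10) (by norm_num), aux_pw ht (-3 / 2) (-6) (by norm_num),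
        aux_pw ht (-5 / 2) (-10) (by norm_num), aux_pw ht (1 / 2) 2 (by norm_num)]
      generalize t ^ (1 / 4 : ℝ) = y at *
      subst e0
      simp only [zpow_neg, zpow_ofNat]
      field_simp
      ring
    · apply IsBigO.sub
      · exact divO _ _ _ (by norm_num) hSO
      · have := (isBigO_refl (fun t : ℝ => t ^ (-(5 / 2) : ℝ)) atTop).const_mul_left (3 / 8)
        rw [show (-5 / 2 : ℝ) = -(5 / 2) by norm_num]
        exact this
    · have hh := dl.add (t32.const_mul (1 / 4))
      simp only [mul_zero, add_zero, sub_zero] at hh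
      exact hh
  have s2 : (fun t => S t - 2 - 1 / 24 * t ^ (-3 / 2 : ℝ)) =O[atTop]
      (fun t : ℝ => t ^ (-3 : ℝ)) := by
    refine aux_B (f' := fun t => (D t + 1 / 4 * t ^ (-3 / 2 : ℝ)) / (4 * t)) (by norm_num) ?_ ?_ ?_
    · filter_upwards [hS, eventually_gt_atTop 0] with t h ht
      refine ((h.sub_const 2).sub
        ((Real.hasDerivAt_rpow_const (Or.inl ht.ne')).const_mul _)).congr_deriv ?_
      have hy : 0 < t ^ (1 / 4 : ℝ) := by positivity
      have e0 := aux_pw ht 1 4 (by norm_num)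
      rw [rpow_one] at e0
      rw [aux_pw ht (-3 / 2 - 1) (-10) (by norm_num), aux_pw ht (-3 / 2) (-6) (by norm_num)]
      generalize t ^ (1 / 4 : ℝ) = y at *
      subst e0
      simp only [zpow_neg, zpow_ofNat]
      field_simp
      ring
    · exact divO _ _ _ (by norm_num) s1
    · have hh := sl.sub (t32.const_mul (1 / 24))
      simp only [mul_zero, add_zero, sub_zero] at hh
      exact hh
  have := aux_A (f := fun t => D t + 1 / 4 * t ^ (-3 / 2 : ℝ) - 35 / 192 * t ^ (-3 : ℝ))
      (g := fun t => (S t - 2 - 1 / 24 * t ^ (-3 / 2 : ℝ)) / (4 * t) + 35 / 64 * t ^ (-4 : ℝ))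
      (a := 4) (by norm_num) ?_ ?_ ?_
  · convert this using 3; norm_num
  · filter_upwards [hD, eventually_gt_atTop 0] with t h ht
    refine ((h.add ((Real.hasDerivAt_rpow_const (Or.inl ht.ne')).const_mul _)).sub
      ((Real.hasDerivAt_rpow_const (Or.inl ht.ne')).const_mul _)).congr_deriv ?_
    have hy : 0 < t ^ (1 / 4 : ℝ) := by positivity
    have e0 := aux_pw ht 1 4 (by norm_num)
    rw [rpow_one] at e0
    rw [aux_pw ht (-3 / 2 - 1) (-10) (by norm_num), aux_pw ht (-3 / 2) (-6) (by norm_num),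
      aux_pw ht (-3 - 1) (-16) (by norm_num), aux_pw ht (-3) (-12) (by norm_num),
      aux_pw ht (-4) (-16) (by norm_num), aux_pw ht (1 / 2) 2 (by norm_num)]
    generalize t ^ (1 / 4 : ℝ) = y at *
    subst e0
    simp only [zpow_neg, zpow_ofNat]
    field_simp
    ring
  · apply IsBigO.add
    · exact divO _ _ _ (by norm_num) s2
    · exact (isBigO_refl (fun t : ℝ => t ^ (-4 : ℝ)) atTop).const_mul_left (35 / 64)
  · have hh := (dl.add (t32.const_mul (1 / 4))).sub (t3.const_mul (35 / 192))
    simp only [mul_zero, add_zero, sub_zero] at hh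
    exact hh

lemma aux_param {g g' : ℝ → ℝ → ℝ} (a b y : ℝ) (hg : Continuous (Function.uncurry g))
    (hg' : Continuous (Function.uncurry g'))
    (hd : ∀ y u, HasDerivAt (fun y => g y u) (g' y u) y) :
    HasDerivAt (fun y => ∫ u in a..b, g y u) (∫ u in a..b, g' y u) y := by
  obtain ⟨M, hM⟩ := ((isCompact_Icc (a := y - 1) (b := y + 1)).prod
    (isCompact_uIcc (a := a) (b := b))).exists_bound_of_continuousOn hg'.continuousOn
  refine (intervalIntegral.hasDerivAt_integral_of_dominated_loc_of_deriv_le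
    (bound := fun _ => M) (s := Set.Icc (y - 1) (y + 1)) (F := g) (F' := g')
    (Icc_mem_nhds (by linarith) (by linarith)) ?_ ?_ ?_ ?_ ?_ ?_).2
  · exact Eventually.of_forall fun x => (hg.uncurry_left x).aestronglyMeasurable
  · exact (hg.uncurry_left y).intervalIntegrable _ _
  · exact (hg'.uncurry_left y).aestronglyMeasurable
  · refine Eventually.of_forall fun u hu x hx => ?_
    exact hM (x, u) ⟨hx, Set.uIoc_subset_uIcc hu⟩
  · exact intervalIntegrable_const
  · exact Eventually.of_forall fun u _ x _ => hd x u

lemma aux_G (Ai Ai' : ℝ → ℝ) (k : ℝ)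
    (hAiD : ∀ t, HasDerivAt Ai (Ai' t) t)
    (hAiODE : ∀ t, HasDerivAt Ai' (t * Ai t) t) (y : ℝ) :
    HasDerivAt (fun y => ∫ u in (1:ℝ)..k, y * (Real.exp (y ^ 3 * (u - u ^ 3 / 3)) *
        (Ai (y ^ 2) * (y * u) - Ai' (y ^ 2))))
      (Real.exp (y ^ 3 * (k - k ^ 3 / 3)) *
          (-2 * y * Ai (y ^ 2) + k * (Ai (y ^ 2) * (y * k) - Ai' (y ^ 2)))
        - Real.exp (y ^ 3 * (1 - 1 ^ 3 / 3)) *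
          (-2 * y * Ai (y ^ 2) + 1 * (Ai (y ^ 2) * (y * 1) - Ai' (y ^ 2)))) y := by
  have c1 : Continuous Ai := continuous_iff_continuousAt.2 fun t => (hAiD t).continuousAt
  have c2 : Continuous Ai' := continuous_iff_continuousAt.2 fun t => (hAiODE t).continuousAt
  let g' : ℝ → ℝ → ℝ := fun y u => Real.exp (y ^ 3 * (u - u ^ 3 / 3)) *
    (y ^ 3 * (1 - u ^ 2) * (-2 * y * Ai (y ^ 2) + u * (Ai (y ^ 2) * (y * u) - Ai' (y ^ 2)))
      + (2 * u * y * Ai (y ^ 2) - Ai' (y ^ 2)))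
  have hg' : Continuous (Function.uncurry g') := by
    simp only [g', Function.uncurry_def]
    fun_prop
  have h := aux_param (g := fun y u => y * (Real.exp (y ^ 3 * (u - u ^ 3 / 3)) *
        (Ai (y ^ 2) * (y * u) - Ai' (y ^ 2)))) (g' := g') 1 k y
        (by simp only [Function.uncurry_def]; fun_prop) hg' ?_
  · convert h using 1
    symm
    refine intervalIntegral.integral_eq_sub_of_hasDerivAt
      (f := fun u => Real.exp (y ^ 3 * (u - u ^ 3 / 3)) *
          (-2 * y * Ai (y ^ 2) + u * (Ai (y ^ 2) * (y * u) - Ai' (y ^ 2)))) ?_ ?_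
    · intro u _
      have d1 : HasDerivAt (fun u : ℝ => y ^ 3 * (u - u ^ 3 / 3)) (y ^ 3 * (1 - u ^ 2)) u := by
        refine (((hasDerivAt_id u).sub ((hasDerivAt_pow 3 u).div_const 3)).const_mul
          (y ^ 3)).congr_deriv ?_
        norm_num
      have d2 : HasDerivAt (fun u : ℝ => -2 * y * Ai (y ^ 2) +
          u * (Ai (y ^ 2) * (y * u) - Ai' (y ^ 2))) (2 * u * y * Ai (y ^ 2) - Ai' (y ^ 2)) u := by
        refine (((hasDerivAt_id u).mul ((((hasDerivAt_id u).const_mul y).const_mul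
          (Ai (y ^ 2))).sub_const (Ai' (y ^ 2)))).const_add _).congr_deriv ?_
        simp only [id]
        ring
      refine (d1.exp.mul d2).congr_deriv ?_
      simp only [g']
      ring
    · exact (hg'.uncurry_left y).intervalIntegrable _ _
  · intro y u
    have p2 := hasDerivAt_pow 2 y
    have d1 : HasDerivAt (fun y : ℝ => y ^ 3 * (u - u ^ 3 / 3)) (3 * y ^ 2 * (u - u ^ 3 / 3)) y := by
      refine ((hasDerivAt_pow 3 y).mul_const _).congr_deriv ?_
      norm_num
    have dA : HasDerivAt (fun y : ℝ => Ai (y ^ 2)) (Ai' (y ^ 2) * (2 * y)) y := by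
      refine (HasDerivAt.comp y (hAiD (y ^ 2)) p2).congr_deriv ?_
      norm_num
    have dB : HasDerivAt (fun y : ℝ => Ai' (y ^ 2)) (y ^ 2 * Ai (y ^ 2) * (2 * y)) y := by
      refine (HasDerivAt.comp y (hAiODE (y ^ 2)) p2).congr_deriv ?_
      norm_num
    refine ((hasDerivAt_id y).mul (d1.exp.mul ((dA.mul ((hasDerivAt_id y).mul_const u)).sub
      dB))).congr_deriv ?_
    simp only [g', id, Pi.mul_apply, Pi.sub_apply]
    ring

lemma aux_lim {S P : ℝ → ℝ} {k : ℝ} (hk : 1 < k) (hS : Tendsto S atTop (nhds 2))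
    (hP : Tendsto P atTop (nhds 1)) :
    Tendsto (fun t : ℝ => ∫ x in (0:ℝ)..((k - 1) * t ^ (3 / 4 : ℝ)),
      Real.exp (-x ^ 2 - x ^ 3 * t ^ (-3 / 4 : ℝ) / 3) * (S t + P t * (x * t ^ (-3 / 4 : ℝ))))
      atTop (nhds (Real.sqrt π)) := by
  have t34 : Tendsto (fun t : ℝ => t ^ (-3 / 4 : ℝ)) atTop (nhds 0) := by
    have := tendsto_rpow_neg_atTop (show (0:ℝ) < 3 / 4 by norm_num)
    convert this using 3; norm_num
  have hX : Tendsto (fun t : ℝ => (k - 1) * t ^ (3 / 4 : ℝ)) atTop atTop :=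
    (tendsto_rpow_atTop (by norm_num)).const_mul_atTop (by linarith)
  have key := MeasureTheory.tendsto_integral_filter_of_dominated_convergence
    (μ := MeasureTheory.volume.restrict (Set.Ioi (0:ℝ))) (l := (atTop : Filter ℝ))
    (F := fun t => (Set.Ioc 0 ((k - 1) * t ^ (3 / 4 : ℝ))).indicator (fun x =>
      Real.exp (-x ^ 2 - x ^ 3 * t ^ (-3 / 4 : ℝ) / 3) * (S t + P t * (x * t ^ (-3 / 4 : ℝ)))))
    (f := fun x => Real.exp (-1 * x ^ 2) * 2)
    (fun x => 3 * Real.exp (-1 * x ^ 2) + 2 * (x * Real.exp (-1 * x ^ 2))) ?_ ?_ ?_ ?_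
  · have e1 : ∫ x in Set.Ioi (0:ℝ), Real.exp (-1 * x ^ 2) * 2 = Real.sqrt π := by
      rw [MeasureTheory.integral_mul_const, integral_gaussian_Ioi]
      simp
    rw [e1] at key
    refine key.congr' ?_
    filter_upwards [eventually_gt_atTop 0] with t ht
    have h0 : 0 ≤ (k - 1) * t ^ (3 / 4 : ℝ) := mul_nonneg (by linarith) (by positivity)
    rw [intervalIntegral.integral_of_le h0, MeasureTheory.setIntegral_indicator measurableSet_Ioc]
    congr 2
    rw [Set.inter_eq_right]
    exact fun x hx => hx.1
  · refine Eventually.of_forall fun t => ?_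
    apply AEMeasurable.aestronglyMeasurable
    apply Measurable.aemeasurable
    apply Measurable.indicator _ measurableSet_Ioc
    fun_prop
  · have hS3 : ∀ᶠ t in atTop, |S t| < 3 := by
      have := hS.abs
      exact this.eventually_lt_const (by norm_num)
    have hP2 : ∀ᶠ t in atTop, |P t| < 2 := by
      have := hP.abs
      exact this.eventually_lt_const (by norm_num)
    have hr : ∀ᶠ t : ℝ in atTop, t ^ (-3 / 4 : ℝ) < 1 := t34.eventually_lt_const (by norm_num)
    filter_upwards [hS3, hP2, hr, eventually_gt_atTop 0] with t h1 h2 h3 h4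
    rw [MeasureTheory.ae_restrict_iff' measurableSet_Ioi]
    refine Eventually.of_forall fun x hx => ?_
    have hx0 : 0 < x := hx
    have hr0 : 0 < t ^ (-3 / 4 : ℝ) := by positivity
    refine le_trans (norm_indicator_le_norm_self _ _) ?_
    rw [Real.norm_eq_abs, abs_mul, abs_of_pos (Real.exp_pos _)]
    have i1 : Real.exp (-x ^ 2 - x ^ 3 * t ^ (-3 / 4 : ℝ) / 3) ≤ Real.exp (-1 * x ^ 2) := by
      apply Real.exp_le_exp.2
      have : 0 < x ^ 3 * t ^ (-3 / 4 : ℝ) / 3 := by positivity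
      linarith
    have i2 : |S t + P t * (x * t ^ (-3 / 4 : ℝ))| ≤ 3 + 2 * x := by
      refine (abs_add_le _ _).trans ?_
      have i3 : |P t * (x * t ^ (-3 / 4 : ℝ))| ≤ 2 * (x * 1) := by
        rw [abs_mul, abs_of_pos (show 0 < x * t ^ (-3 / 4 : ℝ) by positivity)]
        gcongr
      linarith
    calc _ ≤ Real.exp (-1 * x ^ 2) * (3 + 2 * x) := by gcongr
      _ = _ := by ring
  · apply MeasureTheory.Integrable.integrableOn
    exact ((integrable_exp_neg_mul_sq one_pos).const_mul 3).add
      ((integrable_mul_exp_neg_mul_sq one_pos).const_mul 2)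
  · rw [MeasureTheory.ae_restrict_iff' measurableSet_Ioi]
    refine Eventually.of_forall fun x hx => ?_
    have hx0 : 0 < x := hx
    have l1 : Tendsto (fun t : ℝ => Real.exp (-x ^ 2 - x ^ 3 * t ^ (-3 / 4 : ℝ) / 3) *
        (S t + P t * (x * t ^ (-3 / 4 : ℝ)))) atTop
        (nhds (Real.exp (-x ^ 2 - x ^ 3 * 0 / 3) * (2 + 1 * (x * 0)))) := by
      refine Tendsto.mul ?_ (hS.add (hP.mul (t34.const_mul x)))
      exact (Real.continuous_exp.tendsto _).comp
        (tendsto_const_nhds.sub ((t34.const_mul (x ^ 3)).div_const 3))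
    have e : Real.exp (-x ^ 2 - x ^ 3 * 0 / 3) * (2 + 1 * (x * 0)) =
        Real.exp (-1 * x ^ 2) * 2 := by ring_nf
    rw [e] at l1
    refine l1.congr' ?_
    filter_upwards [hX.eventually_ge_atTop x] with t ht
    rw [Set.indicator_of_mem]
    exact ⟨hx0, ht⟩

/-- Laplace-method asymptotics: for fixed `k > 1`, the quantity
`C₂(t) − Υ₂(k) ≈ −∫_{√t}^{k√t} e^{ts − s³/3}(Ai(t)s − Ai'(t)) ds` has the
expansion `−1/2 − (1/(12√π))t^{−3/4} + (35/(1728√π))t^{−9/4} + O(t^{−15/4})`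
as `t → ∞`, given the standard Airy asymptotics with relative error
`O(t^{−3/2})`. -/
theorem stmt18 (Ai Ai' : ℝ → ℝ) (k : ℝ) (hk : 1 < k)
    (hAiD : ∀ t, HasDerivAt Ai (Ai' t) t)
    (hAiODE : ∀ t, HasDerivAt Ai' (t * Ai t) t)
    (hAi : (fun t => Ai t /
        ((2 * Real.sqrt π)⁻¹ * t ^ (-(1 : ℝ) / 4) * Real.exp (-(2 / 3) * t ^ ((3 : ℝ) / 2))) - 1)
      =O[atTop] (fun t => t ^ (-(3 : ℝ) / 2)))
    (hAi' : (fun t => Ai' t /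
        (-(2 * Real.sqrt π)⁻¹ * t ^ ((1 : ℝ) / 4) * Real.exp (-(2 / 3) * t ^ ((3 : ℝ) / 2))) - 1)
      =O[atTop] (fun t => t ^ (-(3 : ℝ) / 2))) :
    (fun t =>
        (-(∫ s in Real.sqrt t..(k * Real.sqrt t),
            Real.exp (t * s - s ^ 3 / 3) * (Ai t * s - Ai' t)))
          - (-1 / 2 - (1 / (12 * Real.sqrt π)) * t ^ (-(3 : ℝ) / 4)
              + (35 / (1728 * Real.sqrt π)) * t ^ (-(9 : ℝ) / 4)))
      =O[atTop] (fun t => t ^ (-(15 : ℝ) / 4)) := by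
  have hw : 0 < Real.sqrt π := Real.sqrt_pos.2 Real.pi_pos
  set w := Real.sqrt π with hwdef
  let E : ℝ → ℝ := fun t => Real.exp (2 / 3 * t ^ (3 / 2 : ℝ))
  have hE : ∀ t, 0 < E t := fun t => Real.exp_pos _
  have hEinv : ∀ t : ℝ, Real.exp (-(2 / 3) * t ^ ((3 : ℝ) / 2)) = (E t)⁻¹ := by
    intro t
    simp only [E]
    rw [← Real.exp_neg]
    ring_nf
  let P : ℝ → ℝ := fun t => 2 * w * (t ^ (1 / 4 : ℝ) * (E t * Ai t))
  let Q : ℝ → ℝ := fun t => -(2 * w) * (t ^ (-1 / 4 : ℝ) * (E t * Ai' t))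
  have hP : (fun t => P t - 1) =O[atTop] (fun t : ℝ => t ^ (-3 / 2 : ℝ)) := by
    refine hAi.congr' ?_ (EventuallyEq.refl _ _)
    filter_upwards [eventually_gt_atTop 0] with t ht
    have := hE t
    have hy : 0 < t ^ (1 / 4 : ℝ) := by positivity
    simp only [P]
    rw [hEinv, aux_pw ht (-1 / 4) (-1) (by norm_num)]
    simp only [zpow_neg, zpow_one]
    field_simp
  have hQ : (fun t => Q t - 1) =O[atTop] (fun t : ℝ => t ^ (-3 / 2 : ℝ)) := by
    refine hAi'.congr' ?_ (EventuallyEq.refl _ _)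
    filter_upwards [eventually_gt_atTop 0] with t ht
    have := hE t
    have hy : 0 < t ^ (1 / 4 : ℝ) := by positivity
    simp only [Q]
    rw [hEinv, aux_pw ht (-1 / 4) (-1) (by norm_num)]
    simp only [zpow_neg, zpow_one]
    field_simp
  have t32 : Tendsto (fun t : ℝ => t ^ (-3 / 2 : ℝ)) atTop (nhds 0) := by
    have := tendsto_rpow_neg_atTop (show (0:ℝ) < 3 / 2 by norm_num)
    convert this using 3; norm_num
  have lP : Tendsto P atTop (nhds 1) := by
    simpa using (hP.trans_tendsto t32).add_const 1
  have lQ : Tendsto Q atTop (nhds 1) := by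
    simpa using (hQ.trans_tendsto t32).add_const 1
  have hdE : ∀ t : ℝ, 0 < t → HasDerivAt E (E t * t ^ (1 / 2 : ℝ)) t := by
    intro t ht
    refine ((Real.hasDerivAt_rpow_const (Or.inl ht.ne')).const_mul (2 / 3)).exp.congr_deriv ?_
    rw [show (3 / 2 - 1 : ℝ) = 1 / 2 by norm_num]
    simp only [E]
    ring
  have hdP : ∀ t : ℝ, 0 < t →
      HasDerivAt P (P t / (4 * t) + t ^ (1 / 2 : ℝ) * (P t - Q t)) t := by
    intro t ht
    refine (((Real.hasDerivAt_rpow_const (Or.inl ht.ne')).mul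
      ((hdE t ht).mul (hAiD t))).const_mul (2 * w)).congr_deriv ?_
    simp only [P, Q, Pi.mul_apply]
    have hy : 0 < t ^ (1 / 4 : ℝ) := by positivity
    have e0 := aux_pw ht 1 4 (by norm_num)
    rw [rpow_one] at e0
    rw [aux_pw ht (1 / 4 - 1) (-3) (by norm_num), aux_pw ht (-1 / 4) (-1) (by norm_num),
      aux_pw ht (1 / 2) 2 (by norm_num)]
    generalize E t = e
    generalize Ai t = A
    generalize Ai' t = B
    generalize t ^ (1 / 4 : ℝ) = y at *
    subst e0
    simp only [zpow_neg, zpow_ofNat, zpow_one]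
    field_simp
    ring
  have hdQ : ∀ t : ℝ, 0 < t →
      HasDerivAt Q (-Q t / (4 * t) - t ^ (1 / 2 : ℝ) * (P t - Q t)) t := by
    intro t ht
    refine (((Real.hasDerivAt_rpow_const (Or.inl ht.ne')).mul
      ((hdE t ht).mul (hAiODE t))).const_mul (-(2 * w))).congr_deriv ?_
    simp only [P, Q, Pi.mul_apply]
    have hy : 0 < t ^ (1 / 4 : ℝ) := by positivity
    have e0 := aux_pw ht 1 4 (by norm_num)
    rw [rpow_one] at e0
    rw [aux_pw ht (-1 / 4 - 1) (-5) (by norm_num), aux_pw ht (-1 / 4) (-1) (by norm_num),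
      aux_pw ht (1 / 2) 2 (by norm_num)]
    generalize E t = e
    generalize Ai t = A
    generalize Ai' t = B
    generalize t ^ (1 / 4 : ℝ) = y at *
    subst e0
    simp only [zpow_neg, zpow_ofNat, zpow_one]
    field_simp
    ring
  have hDexp := aux_D (S := fun t => P t + Q t) (D := fun t => P t - Q t)
    (by
      filter_upwards [eventually_gt_atTop 0] with t ht
      refine ((hdP t ht).add (hdQ t ht)).congr_deriv ?_
      ring)
    (by
      filter_upwards [eventually_gt_atTop 0] with t ht
      refine ((hdP t ht).sub (hdQ t ht)).congr_deriv ?_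
      ring)
    (by
      refine (hP.add hQ).congr_left fun t => ?_
      ring)
    (by
      refine (hP.sub hQ).congr_left fun t => ?_
      ring)
  let F : ℝ → ℝ := fun t => ∫ s in Real.sqrt t..(k * Real.sqrt t),
            Real.exp (t * s - s ^ 3 / 3) * (Ai t * s - Ai' t)
  have lF : Tendsto F atTop (nhds (1 / 2)) := by
    have lS : Tendsto (fun t => P t + Q t) atTop (nhds 2) := by
      have := lP.add lQ
      norm_num at this
      exact this
    have h := (aux_lim hk lS lP).const_mul (1 / (2 * w))
    have e : 1 / (2 * w) * Real.sqrt π = 1 / 2 := by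
      rw [← hwdef]; field_simp
    rw [e] at h
    refine h.congr' ?_
    filter_upwards [eventually_gt_atTop 0] with t ht
    have hy : 0 < t ^ (1 / 4 : ℝ) := by positivity
    have e0 := aux_pw ht 1 4 (by norm_num)
    rw [rpow_one] at e0
    have es : Real.sqrt t = (t ^ (1 / 4 : ℝ)) ^ 2 := by
      rw [Real.sqrt_eq_rpow, aux_pw ht (1 / 2) 2 (by norm_num)]; norm_cast
    have e34 : t ^ (3 / 4 : ℝ) = (t ^ (1 / 4 : ℝ)) ^ 3 := by
      rw [aux_pw ht (3 / 4) 3 (by norm_num)]; norm_cast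
    have e34' : t ^ (-3 / 4 : ℝ) = ((t ^ (1 / 4 : ℝ)) ^ 3)⁻¹ := by
      rw [aux_pw ht (-3 / 4) (-3) (by norm_num)]; simp only [zpow_neg, zpow_ofNat]
    have e14' : t ^ (-1 / 4 : ℝ) = (t ^ (1 / 4 : ℝ))⁻¹ := by
      rw [aux_pw ht (-1 / 4) (-1) (by norm_num)]; simp only [zpow_neg, zpow_one]
    have e32 : t ^ (3 / 2 : ℝ) = (t ^ (1 / 4 : ℝ)) ^ 6 := by
      rw [aux_pw ht (3 / 2) 6 (by norm_num)]; norm_cast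
    simp only [P, Q, F, E]
    rw [es, e34, e34', e14', e32]
    generalize Ai t = A
    generalize Ai' t = B
    generalize t ^ (1 / 4 : ℝ) = y at *
    have e0 : t = y ^ 4 := by rw [e0]; norm_cast
    subst e0
    have hsub := intervalIntegral.mul_integral_comp_mul_add (a := 0) (b := (k - 1) * y ^ 3)
      (f := fun s => Real.exp (y ^ 4 * s - s ^ 3 / 3) * (A * s - B)) (c := y⁻¹) (d := y ^ 2)
    have b1 : y⁻¹ * 0 + y ^ 2 = y ^ 2 := by ring
    have b2 : y⁻¹ * ((k - 1) * y ^ 3) + y ^ 2 = k * y ^ 2 := by field_simp; ring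
    rw [b1, b2] at hsub
    rw [← hsub, ← intervalIntegral.integral_const_mul, ← intervalIntegral.integral_const_mul]
    refine intervalIntegral.integral_congr fun x _ => ?_
    have ee : Real.exp (y ^ 4 * (y⁻¹ * x + y ^ 2) - (y⁻¹ * x + y ^ 2) ^ 3 / 3) =
        Real.exp (-x ^ 2 - x ^ 3 * (y ^ 3)⁻¹ / 3) * Real.exp (2 / 3 * y ^ 6) := by
      rw [← Real.exp_add]
      congr 1
      field_simp
      ring
    simp only [ee]
    field_simp
    ring
  let c : ℝ := 2 / 3 - k + k ^ 3 / 3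
  have hc : 0 < c := by
    have : c = (k - 1) ^ 2 * (k + 2) / 3 := by simp only [c]; ring
    rw [this]
    have : 0 < k - 1 := by linarith
    positivity
  let R : ℝ → ℝ := fun t => 1 / (4 * w) * (t ^ (-1 / 4 : ℝ) *
    (Real.exp (-c * t ^ (3 / 2 : ℝ)) * ((k ^ 2 - 2) * P t + k * Q t)))
  have hdF : ∀ t : ℝ, 0 < t →
      HasDerivAt F (1 / (4 * w) * (t ^ (-1 / 4 : ℝ) * (P t - Q t)) + R t) t := by
    intro t ht
    have h := HasDerivAt.comp t (aux_G Ai Ai' k hAiD hAiODE (Real.sqrt t))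
      (Real.hasDerivAt_sqrt ht.ne')
    have hF : F =ᶠ[nhds t] (fun y => ∫ u in (1:ℝ)..k, y * (Real.exp (y ^ 3 * (u - u ^ 3 / 3)) *
        (Ai (y ^ 2) * (y * u) - Ai' (y ^ 2)))) ∘ Real.sqrt := by
      filter_upwards [eventually_gt_nhds ht] with τ hτ
      have hs2 : Real.sqrt τ ^ 2 = τ := Real.sq_sqrt hτ.le
      have hsub := intervalIntegral.mul_integral_comp_mul_left (a := 1) (b := k)
        (f := fun s => Real.exp (τ * s - s ^ 3 / 3) * (Ai τ * s - Ai' τ)) (c := Real.sqrt τ)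
      simp only [F, Function.comp]
      rw [mul_one, mul_comm (Real.sqrt τ) k] at hsub
      rw [← hsub, ← intervalIntegral.integral_const_mul]
      refine intervalIntegral.integral_congr fun u _ => ?_
      simp only [hs2]
      have : τ * (Real.sqrt τ * u) - (Real.sqrt τ * u) ^ 3 / 3 =
          Real.sqrt τ ^ 3 * (u - u ^ 3 / 3) := by
        nth_rewrite 1 [← hs2]
        ring
      rw [this]
    refine (h.congr_of_eventuallyEq hF).congr_deriv ?_
    rw [Real.sq_sqrt ht.le]
    have hy : 0 < t ^ (1 / 4 : ℝ) := by positivity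
    have es : Real.sqrt t = (t ^ (1 / 4 : ℝ)) ^ 2 := by
      rw [Real.sqrt_eq_rpow, aux_pw ht (1 / 2) 2 (by norm_num)]; norm_cast
    have e14' : t ^ (-1 / 4 : ℝ) = (t ^ (1 / 4 : ℝ))⁻¹ := by
      rw [aux_pw ht (-1 / 4) (-1) (by norm_num)]; simp only [zpow_neg, zpow_one]
    have e32 : t ^ (3 / 2 : ℝ) = (t ^ (1 / 4 : ℝ)) ^ 6 := by
      rw [aux_pw ht (3 / 2) 6 (by norm_num)]; norm_cast
    simp only [R, P, Q, E]
    rw [es, e14', e32]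
    generalize Ai t = A
    generalize Ai' t = B
    generalize t ^ (1 / 4 : ℝ) = y at *
    have x1 : Real.exp ((y ^ 2) ^ 3 * (k - k ^ 3 / 3)) =
        Real.exp (-c * y ^ 6) * Real.exp (2 / 3 * y ^ 6) := by
      rw [← Real.exp_add]
      congr 1
      simp only [c]
      ring
    have x2 : Real.exp ((y ^ 2) ^ 3 * (1 - 1 ^ 3 / 3)) = Real.exp (2 / 3 * y ^ 6) := by
      congr 1
      ring
    rw [x1, x2]
    field_simp
    ring
  have hR : R =O[atTop] (fun t : ℝ => t ^ (-19 / 4 : ℝ)) := by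
    have h1 : (fun t : ℝ => Real.exp (-c * t ^ (3 / 2 : ℝ))) =O[atTop]
        (fun t : ℝ => (t ^ (3 / 2 : ℝ)) ^ (-3 : ℝ)) :=
      ((isLittleO_exp_neg_mul_rpow_atTop hc (-3)).comp_tendsto
        (tendsto_rpow_atTop (show (0:ℝ) < 3 / 2 by norm_num))).isBigO
    have h2 : (fun t => (k ^ 2 - 2) * P t + k * Q t) =O[atTop] (fun _ : ℝ => (1:ℝ)) :=
      ((lP.const_mul (k ^ 2 - 2)).add (lQ.const_mul k)).isBigO_one ℝ
    have h3 := (((isBigO_refl (fun t : ℝ => t ^ (-1 / 4 : ℝ)) atTop).mul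
      (h1.mul h2)).const_mul_left (1 / (4 * w)))
    refine h3.congr' (EventuallyEq.refl _ _) ?_
    filter_upwards [eventually_gt_atTop 0] with t ht
    rw [mul_one, ← rpow_mul ht.le, ← rpow_add ht]
    norm_num
  have t34 : Tendsto (fun t : ℝ => t ^ (-3 / 4 : ℝ)) atTop (nhds 0) := by
    have := tendsto_rpow_neg_atTop (show (0:ℝ) < 3 / 4 by norm_num)
    convert this using 3; norm_num
  have t94 : Tendsto (fun t : ℝ => t ^ (-9 / 4 : ℝ)) atTop (nhds 0) := by
    have := tendsto_rpow_neg_atTop (show (0:ℝ) < 9 / 4 by norm_num)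
    convert this using 3; norm_num
  have hfin := aux_B (a := 15 / 4) (f := fun t => - F t - (-1 / 2 - (1 / (12 * w)) * t ^ (-3 / 4 : ℝ)
              + (35 / (1728 * w)) * t ^ (-9 / 4 : ℝ)))
    (f' := fun t => -(1 / (4 * w) * (t ^ (-1 / 4 : ℝ) * (P t - Q t + 1 / 4 * t ^ (-3 / 2 : ℝ)
      - 35 / 192 * t ^ (-3 : ℝ))) + R t)) (by norm_num) ?_ ?_ ?_
  · rw [show (-(15 : ℝ) / 4) = -(15 / 4) by norm_num]
    exact hfin
  · filter_upwards [eventually_gt_atTop 0] with t ht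
    refine ((hdF t ht).neg.sub (((Real.hasDerivAt_rpow_const (Or.inl ht.ne')).const_mul
      (1 / (12 * w))).const_sub (-1 / 2) |>.add ((Real.hasDerivAt_rpow_const
        (Or.inl ht.ne')).const_mul (35 / (1728 * w))))).congr_deriv ?_
    have hy : 0 < t ^ (1 / 4 : ℝ) := by positivity
    rw [aux_pw ht (-1 / 4) (-1) (by norm_num), aux_pw ht (-3 / 4 - 1) (-7) (by norm_num),
      aux_pw ht (-9 / 4 - 1) (-13) (by norm_num), aux_pw ht (-3 / 2) (-6) (by norm_num),
      aux_pw ht (-3) (-12) (by norm_num)]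
    generalize P t = p
    generalize Q t = q
    generalize R t = r
    generalize t ^ (1 / 4 : ℝ) = y at *
    simp only [zpow_neg, zpow_ofNat, zpow_one]
    field_simp
    ring
  · refine IsBigO.neg_left (IsBigO.add ?_ ?_)
    · have h3 := ((isBigO_refl (fun t : ℝ => t ^ (-1 / 4 : ℝ)) atTop).mul
        hDexp).const_mul_left (1 / (4 * w))
      refine h3.congr' (EventuallyEq.refl _ _) ?_
      filter_upwards [eventually_gt_atTop 0] with t ht
      rw [← rpow_add ht]
      norm_num
    · rw [show (-(15 / 4) - 1 : ℝ) = -19 / 4 by norm_num]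
      exact hR
  · have h := lF.neg.sub (((t34.const_mul (1 / (12 * w))).const_sub (-1 / 2)).add
      (t94.const_mul (35 / (1728 * w))))
    have e : -(1 / 2 : ℝ) - (-1 / 2 - 1 / (12 * w) * 0 + 35 / (1728 * w) * 0) = 0 := by ring
    rw [e] at h
    exact h
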